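/- Fix t1, t2 > 0, set m = min(t1, t2), t* = 1/m, and for N > 1 and τ ∈ (0, 2] set λ̃(N, τ) = N^{-τ}·m·(t1 - N^{-τ}·m)/t1. Then the limit as N → ∞ of (1/(N·t*)) · ∫_{[0, N t*]²} dx1 dx2 ∫_0^2 dτ · p_{2N^τ/m - 1/t1 - 1/t2}(x2 - x1) · ∫_ℝ p_1(z) · min(1, |z·(λ̃(N,τ))^{1/2} - N^{-τ}·m·(x2 - x1)|^{1/2}) dz equals 0. -/

import Mathlib

open MeasureTheory Real Filter

/-- The heat kernel `p_t(x) = (2πt)^{-1/2} exp(-x²/(2t))`. -/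
noncomputable def heatKernel (t x : ℝ) : ℝ :=
  Real.exp (-x ^ 2 / (2 * t)) / Real.sqrt (2 * Real.pi * t)

/-!
Write `q = N^{-τ} m`, `s = 2/q - 1/t1 - 1/t2` and `l = q (t1 - q) / t1`. If `Y` is centred Gaussian
of variance `s` and `Z` an independent standard Gaussian, then `Z √l - q Y` has second moment
`l + q² s ≤ 3 q`, so by Jensen's inequality the expectation of `|Z √l - q Y|^{1/2}` is at most
`(3 q)^{1/4} = (3 m)^{1/4} N^{-τ/4}`. The integrand depends on `x1`, `x2` through `x2 - x1` only,
so the integral over the box divided by its side length is at most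
`∫_0^∞ (3 m)^{1/4} N^{-τ/4} dτ = 4 (3 m)^{1/4} / log N`.
-/

open ProbabilityTheory Set
open scoped ENNReal

section Moments

variable {Ω : Type*} [MeasurableSpace Ω] {μ : Measure Ω} [IsProbabilityMeasure μ]

lemma lintegral_rpow_le_rpow_lintegral {f : Ω → ℝ≥0∞} (hf : AEMeasurable f μ) {p : ℝ}
    (hp₀ : 0 < p) (hp₁ : p ≤ 1) : ∫⁻ ω, f ω ^ p ∂μ ≤ (∫⁻ ω, f ω ∂μ) ^ p := by
  have h := eLpNorm'_le_eLpNorm'_of_exponent_le hp₀ hp₁ μ hf.aestronglyMeasurable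
  simpa [eLpNorm', ENNReal.rpow_inv_le_iff hp₀] using h

lemma lintegral_ofReal_rpow_le_ofReal_rpow_integral {f : Ω → ℝ} (hf : Integrable f μ)
    (hf₀ : ∀ ω, 0 ≤ f ω) {p : ℝ} (hp₀ : 0 < p) (hp₁ : p ≤ 1) :
    ∫⁻ ω, ENNReal.ofReal (f ω ^ p) ∂μ ≤ ENNReal.ofReal ((∫ ω, f ω ∂μ) ^ p) := by
  rw [← ENNReal.ofReal_rpow_of_nonneg (integral_nonneg hf₀) hp₀.le,
    ofReal_integral_eq_lintegral_ofReal hf (ae_of_all _ hf₀)]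
  simp_rw [← ENNReal.ofReal_rpow_of_nonneg (hf₀ _) hp₀.le]
  exact lintegral_rpow_le_rpow_lintegral hf.aemeasurable.ennreal_ofReal hp₀ hp₁

lemma integral_sq_mul_sub {X : Ω → ℝ} (hX : MemLp X 2 μ) (a b : ℝ) :
    ∫ ω, (X ω * a - b) ^ 2 ∂μ = a ^ 2 * Var[X; μ] + ((∫ ω, X ω ∂μ) * a - b) ^ 2 := by
  have hXa : MemLp (fun ω ↦ X ω * a) 2 μ := hX.mul_const a
  have hvar : Var[fun ω ↦ X ω * a - b; μ] = a ^ 2 * Var[X; μ] := by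
    rw [variance_sub_const hXa.aestronglyMeasurable, variance_mul_const, mul_comm]
  have hmean : ∫ ω, (X ω * a - b) ∂μ = (∫ ω, X ω ∂μ) * a - b := by
    rw [integral_sub (hXa.integrable one_le_two) (integrable_const b), integral_mul_const]
    simp
  have hsub := variance_eq_sub (hXa.sub (memLp_const b))
  simp only [Pi.sub_def, Pi.pow_def, hvar, hmean] at hsub
  linarith

end Moments

lemma enorm_integral_integral_integral_sub_le {α E : Type*} [MeasurableSpace α] {ν : Measure α}
    [SFinite ν] [NormedAddCommGroup E] [NormedSpace ℝ E] {K : α → ℝ → E}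
    (hK : StronglyMeasurable (Function.uncurry K)) (s t : Set ℝ) :
    ‖∫ x in s, ∫ y in t, ∫ a, K a (y - x) ∂ν‖ₑ ≤ volume s * ∫⁻ a, (∫⁻ y, ‖K a y‖ₑ) ∂ν := by
  have inner_le (x : ℝ) :
      ‖∫ y in t, ∫ a, K a (y - x) ∂ν‖ₑ ≤ ∫⁻ a, (∫⁻ y, ‖K a y‖ₑ) ∂ν := by
    calc ‖∫ y in t, ∫ a, K a (y - x) ∂ν‖ₑ
        ≤ ∫⁻ y in t, ‖∫ a, K a (y - x) ∂ν‖ₑ := enorm_integral_le_lintegral_enorm _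
      _ ≤ ∫⁻ y, ‖∫ a, K a (y - x) ∂ν‖ₑ := setLIntegral_le_lintegral _ _
      _ ≤ ∫⁻ y, ∫⁻ a, ‖K a (y - x)‖ₑ ∂ν :=
          lintegral_mono fun _ ↦ enorm_integral_le_lintegral_enorm _
      _ = ∫⁻ a, (∫⁻ y, ‖K a (y - x)‖ₑ) ∂ν := lintegral_lintegral_swap
          (hK.enorm.comp (f := fun p : ℝ × α ↦ (p.2, p.1 - x)) (by fun_prop)).aemeasurable
      _ = ∫⁻ a, (∫⁻ y, ‖K a y‖ₑ) ∂ν :=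
          lintegral_congr fun a ↦ lintegral_sub_right_eq_self (fun y ↦ ‖K a y‖ₑ) x
  rw [mul_comm, ← setLIntegral_const]
  exact (enorm_integral_le_lintegral_enorm _).trans (lintegral_mono inner_le)

lemma lintegral_exp_neg_mul_Ioi {k : ℝ} (hk : 0 < k) :
    ∫⁻ τ in Ioi (0 : ℝ), ENNReal.ofReal (exp (-k * τ)) = ENNReal.ofReal (1 / k) := by
  rw [← ofReal_integral_eq_lintegral_ofReal (integrableOn_exp_mul_Ioi (neg_lt_zero.2 hk) 0)
    (ae_of_all _ fun _ ↦ (exp_pos _).le), integral_exp_mul_Ioi (neg_lt_zero.2 hk)]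
  simp

lemma lintegral_rpow_neg_mul_rpow_Ioi {N c p : ℝ} (hN : 1 < N) (hc : 0 ≤ c) (hp : 0 < p) :
    ∫⁻ τ in Ioi (0 : ℝ), ENNReal.ofReal ((N ^ (-τ) * c) ^ p) =
      ENNReal.ofReal (c ^ p / (p * log N)) := by
  have hN₀ : 0 < N := one_pos.trans hN
  have hexp (τ : ℝ) : (N ^ (-τ) * c) ^ p = c ^ p * exp (-(p * log N) * τ) := by
    rw [mul_rpow (by positivity) hc, ← rpow_mul hN₀.le, rpow_def_of_pos hN₀, mul_comm]
    ring_nf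
  simp_rw [hexp, ENNReal.ofReal_mul (rpow_nonneg hc p)]
  rw [lintegral_const_mul _ (by fun_prop), lintegral_exp_neg_mul_Ioi (mul_pos hp (log_pos hN)),
    ← ENNReal.ofReal_mul (rpow_nonneg hc p), mul_one_div]

section HeatKernel

lemma heatKernel_nonneg (t x : ℝ) : 0 ≤ heatKernel t x := by
  unfold heatKernel
  positivity

@[fun_prop]
lemma measurable_heatKernel {α : Type*} [MeasurableSpace α] {f g : α → ℝ} (hf : Measurable f)
    (hg : Measurable g) : Measurable fun a ↦ heatKernel (f a) (g a) := by
  unfold heatKernel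
  fun_prop

variable {t : ℝ}

lemma heatKernel_eq_gaussianPDFReal (ht : 0 < t) :
    heatKernel t = gaussianPDFReal 0 t.toNNReal := by
  ext x
  simp [heatKernel, gaussianPDFReal, coe_toNNReal t ht.le, div_eq_inv_mul]

lemma integral_heatKernel_mul (ht : 0 < t) (f : ℝ → ℝ) :
    ∫ x, heatKernel t x * f x = ∫ x, f x ∂gaussianReal 0 t.toNNReal := by
  simp [integral_gaussianReal_eq_integral_smul (toNNReal_pos.2 ht).ne',
    heatKernel_eq_gaussianPDFReal ht]

lemma lintegral_heatKernel_mul (ht : 0 < t) (f : ℝ → ℝ≥0∞) :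
    ∫⁻ x, ENNReal.ofReal (heatKernel t x) * f x = ∫⁻ x, f x ∂gaussianReal 0 t.toNNReal := by
  rw [gaussianReal_of_var_ne_zero _ (toNNReal_pos.2 ht).ne',
    lintegral_withDensity_eq_lintegral_mul_non_measurable _ (measurable_gaussianPDF _ _)
      (ae_of_all _ fun _ ↦ gaussianPDF_lt_top)]
  simp [gaussianPDF, heatKernel_eq_gaussianPDFReal ht]

lemma integral_sq_mul_sub_gaussianReal (ht : 0 ≤ t) (a b : ℝ) :
    ∫ z, (z * a - b) ^ 2 ∂gaussianReal 0 t.toNNReal = a ^ 2 * t + b ^ 2 := by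
  simpa [ht] using integral_sq_mul_sub (memLp_id_gaussianReal (μ := 0) (v := t.toNNReal) 2) a b

end HeatKernel

/-- The expectation of `min 1 |Z √l - b|^{1/2}` for a standard Gaussian `Z`; the paper's inner
integral is the case `l = λ̃(N, τ)`, `b = N^{-τ} m (x2 - x1)`. -/
noncomputable def meanTruncSqrt (l b : ℝ) : ℝ :=
  ∫ z, heatKernel 1 z * min 1 (|z * l ^ ((1 : ℝ) / 2) - b| ^ ((1 : ℝ) / 2))

@[fun_prop]
lemma measurable_meanTruncSqrt {α : Type*} [MeasurableSpace α] {f g : α → ℝ} (hf : Measurable f)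
    (hg : Measurable g) : Measurable fun a ↦ meanTruncSqrt (f a) (g a) := by
  refine (StronglyMeasurable.integral_prod_right (Measurable.stronglyMeasurable ?_)).measurable
  fun_prop

lemma enorm_meanTruncSqrt_le {l : ℝ} (hl : 0 ≤ l) (b : ℝ) :
    ‖meanTruncSqrt l b‖ₑ ≤ ENNReal.ofReal ((l + b ^ 2) ^ ((1 : ℝ) / 4)) := by
  set X : ℝ → ℝ := fun z ↦ z * l ^ ((1 : ℝ) / 2) - b
  set γ := gaussianReal 0 (toNNReal 1)
  have pointwise (z : ℝ) : ‖min 1 (|X z| ^ ((1 : ℝ) / 2))‖ₑ ≤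
      ENNReal.ofReal ((X z ^ 2) ^ ((1 : ℝ) / 4)) := by
    rw [enorm_of_nonneg (by positivity)]
    gcongr
    refine (min_le_right _ _).trans_eq ?_
    rw [← sq_abs, ← rpow_natCast_mul (abs_nonneg _)]
    norm_num
  have sq_integrable : Integrable (fun z ↦ X z ^ 2) γ :=
    (((memLp_id_gaussianReal 2).mul_const _).sub (memLp_const b)).integrable_sq
  have secondMoment : ∫ z, X z ^ 2 ∂γ = l + b ^ 2 := by
    rw [integral_sq_mul_sub_gaussianReal zero_le_one, ← sqrt_eq_rpow, sq_sqrt hl, mul_one]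
  calc ‖meanTruncSqrt l b‖ₑ
      = ‖∫ z, min 1 (|X z| ^ ((1 : ℝ) / 2)) ∂γ‖ₑ := by
        rw [meanTruncSqrt, integral_heatKernel_mul one_pos]
    _ ≤ ∫⁻ z, ENNReal.ofReal ((X z ^ 2) ^ ((1 : ℝ) / 4)) ∂γ :=
        (enorm_integral_le_lintegral_enorm _).trans (lintegral_mono pointwise)
    _ ≤ ENNReal.ofReal ((l + b ^ 2) ^ ((1 : ℝ) / 4)) := by
        rw [← secondMoment]
        exact lintegral_ofReal_rpow_le_ofReal_rpow_integral sq_integrable (fun _ ↦ sq_nonneg _)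
          (by norm_num) (by norm_num)

lemma lintegral_enorm_heatKernel_mul_meanTruncSqrt_le {s l : ℝ} (hs : 0 < s) (hl : 0 ≤ l)
    (c : ℝ) : ∫⁻ y, ‖heatKernel s y * meanTruncSqrt l (c * y)‖ₑ ≤
      ENNReal.ofReal ((l + c ^ 2 * s) ^ ((1 : ℝ) / 4)) := by
  set γ := gaussianReal 0 s.toNNReal
  have sq_integrable : Integrable (fun y : ℝ ↦ (c * y) ^ 2) γ :=
    ((memLp_id_gaussianReal 2).const_mul c).integrable_sq
  have mean : ∫ y, (l + (c * y) ^ 2) ∂γ = l + c ^ 2 * s := by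
    rw [integral_add (integrable_const l) sq_integrable]
    simpa [mul_comm c] using integral_sq_mul_sub_gaussianReal hs.le c 0
  calc ∫⁻ y, ‖heatKernel s y * meanTruncSqrt l (c * y)‖ₑ
      = ∫⁻ y, ‖meanTruncSqrt l (c * y)‖ₑ ∂γ := by
        simp_rw [enorm_mul, enorm_of_nonneg (heatKernel_nonneg _ _), lintegral_heatKernel_mul hs, γ]
    _ ≤ ∫⁻ y, ENNReal.ofReal ((l + (c * y) ^ 2) ^ ((1 : ℝ) / 4)) ∂γ :=
        lintegral_mono fun y ↦ enorm_meanTruncSqrt_le hl (c * y)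
    _ ≤ ENNReal.ofReal ((l + c ^ 2 * s) ^ ((1 : ℝ) / 4)) := by
        rw [← mean]
        exact lintegral_ofReal_rpow_le_ofReal_rpow_integral
          ((integrable_const l).add sq_integrable) (fun y ↦ add_nonneg hl (sq_nonneg _))
          (by norm_num) (by norm_num)

lemma lintegral_enorm_heatKernel_mul_meanTruncSqrt_le_three_mul {t1 t2 q : ℝ} (hq : 0 < q)
    (hq1 : q < t1) (hq2 : q < t2) :
    ∫⁻ y, ‖heatKernel (2 / q - 1 / t1 - 1 / t2) y *
        meanTruncSqrt (q * (t1 - q) / t1) (q * y)‖ₑ ≤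
      ENNReal.ofReal ((3 * q) ^ ((1 : ℝ) / 4)) := by
  have ht1 : 0 < t1 := hq.trans hq1
  have ht2 : 0 < t2 := hq.trans hq2
  have hs : 0 < 2 / q - 1 / t1 - 1 / t2 := by
    have h1 : 1 / t1 < 1 / q := one_div_lt_one_div_of_lt hq hq1
    have h2 : 1 / t2 < 1 / q := one_div_lt_one_div_of_lt hq hq2
    have h : 2 / q = 1 / q + 1 / q := by ring
    linarith
  have hl : 0 ≤ q * (t1 - q) / t1 :=
    div_nonneg (mul_nonneg hq.le (sub_nonneg.2 hq1.le)) ht1.le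
  have secondMoment_le : q * (t1 - q) / t1 + q ^ 2 * (2 / q - 1 / t1 - 1 / t2) ≤ 3 * q := by
    have h : q * (t1 - q) / t1 + q ^ 2 * (2 / q - 1 / t1 - 1 / t2) =
        3 * q - 2 * q ^ 2 / t1 - q ^ 2 / t2 := by
      field_simp
      ring
    have : 0 ≤ 2 * q ^ 2 / t1 := by positivity
    have : 0 ≤ q ^ 2 / t2 := by positivity
    linarith
  refine (lintegral_enorm_heatKernel_mul_meanTruncSqrt_le hs hl q).trans ?_
  gcongr

/-- The integrand of the `τ`-integral as a function of the displacement `y = x2 - x1`. -/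
noncomputable def displacementKernel (t1 t2 m N τ y : ℝ) : ℝ :=
  heatKernel (2 * N ^ τ / m - 1 / t1 - 1 / t2) y *
    meanTruncSqrt (N ^ (-τ) * m * (t1 - N ^ (-τ) * m) / t1) (N ^ (-τ) * m * y)

lemma stronglyMeasurable_displacementKernel (t1 t2 m N : ℝ) :
    StronglyMeasurable (Function.uncurry (displacementKernel t1 t2 m N)) := by
  refine Measurable.stronglyMeasurable ?_
  unfold displacementKernel Function.uncurry
  fun_prop

section DisplacementKernel

variable {t1 t2 m N : ℝ}

lemma lintegral_enorm_displacementKernel_le {τ : ℝ} (hm : 0 < m) (hm1 : m ≤ t1) (hm2 : m ≤ t2)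
    (hN : 1 < N) (hτ : 0 < τ) :
    ∫⁻ y, ‖displacementKernel t1 t2 m N τ y‖ₑ ≤
      ENNReal.ofReal ((N ^ (-τ) * (3 * m)) ^ ((1 : ℝ) / 4)) := by
  have hN₀ : 0 < N := one_pos.trans hN
  have hq : N ^ (-τ) * m < m :=
    mul_lt_of_lt_one_left hm (rpow_lt_one_of_one_lt_of_neg hN (neg_lt_zero.2 hτ))
  have htime : 2 * N ^ τ / m = 2 / (N ^ (-τ) * m) := by
    rw [rpow_neg hN₀.le]
    field_simp
  simp only [displacementKernel, htime, mul_left_comm _ 3 m]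
  exact lintegral_enorm_heatKernel_mul_meanTruncSqrt_le_three_mul (by positivity)
    (hq.trans_le hm1) (hq.trans_le hm2)

lemma lintegral_Ioi_lintegral_enorm_displacementKernel_le (hm : 0 < m) (hm1 : m ≤ t1)
    (hm2 : m ≤ t2) (hN : 1 < N) :
    ∫⁻ τ in Ioi 0, (∫⁻ y, ‖displacementKernel t1 t2 m N τ y‖ₑ) ≤
      ENNReal.ofReal ((3 * m) ^ ((1 : ℝ) / 4) / (1 / 4 * log N)) := by
  rw [← lintegral_rpow_neg_mul_rpow_Ioi hN (by positivity) (by norm_num)]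
  exact setLIntegral_mono' measurableSet_Ioi fun τ hτ ↦
    lintegral_enorm_displacementKernel_le hm hm1 hm2 hN hτ

lemma norm_integral_box_displacementKernel_le {L T : ℝ} (hm : 0 < m) (hm1 : m ≤ t1)
    (hm2 : m ≤ t2) (hN : 1 < N) (hL : 0 ≤ L) (hT : 0 ≤ T) :
    ‖∫ x1 in (0 : ℝ)..L, ∫ x2 in (0 : ℝ)..L, ∫ τ in (0 : ℝ)..T,
        displacementKernel t1 t2 m N τ (x2 - x1)‖ ≤
      L * ((3 * m) ^ ((1 : ℝ) / 4) / (1 / 4 * log N)) := by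
  have hlog : 0 < log N := log_pos hN
  have hbox := enorm_integral_integral_integral_sub_le (ν := volume.restrict (Ioc 0 T))
    (stronglyMeasurable_displacementKernel t1 t2 m N) (Ioc 0 L) (Ioc 0 L)
  simp only [intervalIntegral.integral_of_le hL, intervalIntegral.integral_of_le hT]
  rw [← ENNReal.ofReal_le_ofReal_iff (by positivity), ofReal_norm, ENNReal.ofReal_mul hL]
  rw [Real.volume_Ioc, sub_zero] at hbox
  refine hbox.trans ?_
  gcongr
  exact (lintegral_mono_set Ioc_subset_Ioi_self).trans
    (lintegral_Ioi_lintegral_enorm_displacementKernel_le hm hm1 hm2 hN)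

end DisplacementKernel

theorem stmt_18 (t1 t2 m tstar : ℝ) (ht1 : 0 < t1) (ht2 : 0 < t2)
    (hm : m = min t1 t2) (htstar : tstar = 1 / m) :
    Tendsto (fun N : ℝ =>
      (1 / (N * tstar)) *
        ∫ x1 in (0:ℝ)..(N * tstar), ∫ x2 in (0:ℝ)..(N * tstar), ∫ τ in (0:ℝ)..2,
          heatKernel (2 * N ^ τ / m - 1 / t1 - 1 / t2) (x2 - x1) *
            ∫ z : ℝ, heatKernel 1 z *
              min 1 (|z * (N ^ (-τ) * m * (t1 - N ^ (-τ) * m) / t1) ^ ((1:ℝ)/2)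
                  - N ^ (-τ) * m * (x2 - x1)| ^ ((1:ℝ)/2)))
      atTop (nhds 0) := by
  have hm₀ : 0 < m := hm ▸ lt_min ht1 ht2
  have htstar₀ : 0 < tstar := htstar ▸ one_div_pos.2 hm₀
  have hlim : Tendsto (fun N ↦ (3 * m) ^ ((1 : ℝ) / 4) / (1 / 4 * log N)) atTop (nhds 0) :=
    (tendsto_log_atTop.const_mul_atTop (by norm_num)).const_div_atTop _
  refine squeeze_zero_norm' ?_ hlim
  filter_upwards [eventually_gt_atTop 1] with N hN
  have hL : 0 < N * tstar := by positivity
  rw [norm_mul, norm_of_nonneg (one_div_pos.2 hL).le, one_div, inv_mul_le_iff₀ hL]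
  exact norm_integral_box_displacementKernel_le hm₀ (hm.trans_le (min_le_left _ _))
    (hm.trans_le (min_le_right _ _)) hN hL.le zero_le_two
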